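/- For all m, n ≥ 0, the poset NC(V_{m,n}) admits a symmetric chain decomposition: its underlying set can be partitioned into saturated chains C (each consecutive pair of elements of C is a covering pair in NC(V_{m,n})) such that for each chain C, ρ(min C) + ρ(max C) = (m + n + 1) − 1, where ρ(π) = (m + n + 1) − (number of blocks of π). -/

import Mathlib

open Finset

/-- A finpartition of a finite set of points in the plane is *noncrossing* if the
convex hulls (over `ℝ`) of its blocks are pairwise disjoint. -/
def IsNoncrossing {P : Finset ℂ} (π : Finpartition P) : Prop :=
  (π.parts : Set (Finset ℂ)).Pairwise fun B₁ B₂ =>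
    Disjoint (convexHull ℝ (B₁ : Set ℂ)) (convexHull ℝ (B₂ : Set ℂ))

/-- The poset `NC(P)` of noncrossing partitions of `P`, ordered by refinement:
`π ≤ μ` iff every block of `μ` is a union of blocks of `π`. -/
abbrev NC (P : Finset ℂ) : Type := {π : Finpartition P // IsNoncrossing π}

/-- The blocks of a noncrossing partition. -/
def NC.parts {P : Finset ℂ} (π : NC P) : Finset (Finset ℂ) := π.1.parts

/-- Two points lie in a common block of a noncrossing partition. -/
def NC.SameBlock {P : Finset ℂ} (π : NC P) (a b : ℂ) : Prop :=
  ∃ B ∈ π.parts, a ∈ B ∧ b ∈ B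

/-- The open cone configuration `U_{m,n} = {1, …, m} ∪ {i, 2i, …, ni} ⊆ ℂ`. -/
noncomputable def Uconfig (m n : ℕ) : Finset ℂ :=
  ((Finset.Icc 1 m).image fun j : ℕ => (j : ℂ)) ∪
    ((Finset.Icc 1 n).image fun k : ℕ => (k : ℂ) * Complex.I)

/-- The closed cone configuration `V_{m,n} = U_{m,n} ∪ {0}`. -/
noncomputable def Vconfig (m n : ℕ) : Finset ℂ := insert 0 (Uconfig m n)


theorem boolean_scd {α : Type} [DecidableEq α] (S : Finset α) :
    ∃ C : Set (List (Finset α)), [] ∉ C ∧ (∀ l ∈ C, ∀ x ∈ l, x ⊆ S) ∧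
      (∀ x, x ⊆ S → ∃ l ∈ C, x ∈ l) ∧
      (∀ l ∈ C, ∀ l' ∈ C, ∀ x, x ∈ l → x ∈ l' → l = l') ∧
      (∀ l ∈ C, List.IsChain (fun x y => ∃ a, a ∉ x ∧ y = insert a x) l) ∧
      (∀ l ∈ C, ∀ u ∈ l.head?, ∀ v ∈ l.getLast?, u.card + v.card = S.card) := by
  induction S using Finset.induction_on with
  | empty =>
    refine ⟨{[∅]}, by simp, by simp, by simp, by simp, by simp, by simp⟩
  | insert a S ha ih =>
    obtain ⟨C, h0, hsub, hex, huniq, hch, hcard⟩ := ih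
    have haC : ∀ l ∈ C, ∀ x ∈ l, a ∉ x := fun l hl x hx hax => ha (hsub l hl x hx hax)
    have hinj : ∀ x y : Finset α, a ∉ x → a ∉ y → insert a x = insert a y → x = y := by
      intro x y hx hy h
      rw [← Finset.erase_insert hx, ← Finset.erase_insert hy, h]
    have hnd : ∀ i z, i ++ [z] ∈ C → z ∉ i := by
      intro i z h hz
      have h1 : List.IsChain (fun x y : Finset α => x.card < y.card) (i ++ [z]) := by
        refine (hch _ h).imp ?_
        rintro x y ⟨b, hb, rfl⟩
        rw [Finset.card_insert_of_notMem hb]; omega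
      have : IsTrans (Finset α) (fun x y : Finset α => x.card < y.card) :=
        ⟨fun a b c h h' => lt_trans h h'⟩
      have h2 := h1.pairwise
      rw [List.pairwise_append] at h2
      exact lt_irrefl _ (h2.2.2 z hz z (by simp))
    refine ⟨{L | ∃ i z, i ++ [z] ∈ C ∧ (L = i ++ [z, insert a z] ∨
      (i ≠ [] ∧ L = i.map (insert a)))}, ?_, ?_, ?_, ?_, ?_, ?_⟩
    · rintro ⟨i, z, h, h' | ⟨h1, h2⟩⟩
      · simp at h'
      · exact h1 (by simpa using h2.symm)
    · rintro L ⟨i, z, h, rfl | ⟨h1, rfl⟩⟩ x hx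
      · have := hsub _ h
        simp only [List.mem_append, List.mem_cons, List.not_mem_nil, or_false] at hx this
        rcases hx with hx | rfl | rfl
        · exact (this x (Or.inl hx)).trans (subset_insert _ _)
        · exact (this x (Or.inr rfl)).trans (subset_insert _ _)
        · exact insert_subset_insert _ (this z (Or.inr rfl))
      · rw [List.mem_map] at hx
        obtain ⟨y, hy, rfl⟩ := hx
        exact insert_subset_insert _ (hsub _ h y (by simp [hy]))
    · intro x hx
      obtain ⟨l, hl, hy⟩ := hex (x.erase a) (by rwa [← subset_insert_iff])
      have hne : l ≠ [] := by rintro rfl; simp at hy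
      obtain ⟨i, z, rfl⟩ : ∃ i z, l = i ++ [z] :=
        ⟨_, _, (List.dropLast_append_getLast hne).symm⟩
      by_cases hax : a ∈ x
      · simp only [List.mem_append, List.mem_cons, List.not_mem_nil, or_false] at hy
        rcases hy with hy | hy
        · refine ⟨i.map (insert a), ⟨i, z, hl, Or.inr ⟨?_, rfl⟩⟩, ?_⟩
          · rintro rfl; simp at hy
          · exact List.mem_map.2 ⟨_, hy, insert_erase hax⟩
        · refine ⟨_, ⟨i, z, hl, Or.inl rfl⟩, ?_⟩
          rw [← hy, insert_erase hax]; simp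
      · rw [erase_eq_of_notMem hax] at hy
        refine ⟨_, ⟨i, z, hl, Or.inl rfl⟩, ?_⟩
        simp only [List.mem_append, List.mem_cons, List.not_mem_nil, or_false] at hy ⊢
        tauto
    · have _key_fact := trivial
      have key : ∀ i z L x, i ++ [z] ∈ C → x ∈ L → (L = i ++ [z, insert a z] ∨
          (i ≠ [] ∧ L = i.map (insert a))) → x.erase a ∈ i ++ [z] ∧
          ((L = i ++ [z, insert a z] ∧ (a ∉ x ∨ x.erase a = z)) ∨
            (L = i.map (insert a) ∧ a ∈ x ∧ x.erase a ∈ i)) := by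
        rintro i z L x h hx (rfl | ⟨h1, rfl⟩)
        · have := haC _ h
          simp only [List.mem_append, List.mem_cons, List.not_mem_nil, or_false] at hx this ⊢
          rcases hx with hx | rfl | rfl
          · have h2 := this x (Or.inl hx)
            rw [erase_eq_of_notMem h2]
            exact ⟨Or.inl hx, Or.inl ⟨by trivial, Or.inl h2⟩⟩
          · have h2 := this x (Or.inr rfl)
            rw [erase_eq_of_notMem h2]
            exact ⟨Or.inr rfl, Or.inl ⟨by trivial, Or.inl h2⟩⟩
          · have h2 := this z (Or.inr rfl)
            rw [erase_insert h2]
            exact ⟨Or.inr rfl, Or.inl ⟨by trivial, Or.inr rfl⟩⟩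
        · rw [List.mem_map] at hx
          obtain ⟨y, hy, rfl⟩ := hx
          rw [erase_insert (haC _ h y (by simp [hy]))]
          exact ⟨by simp [hy], Or.inr ⟨rfl, by simp, hy⟩⟩
      rintro L ⟨i, z, h, hL⟩ L' ⟨i', z', h', hL'⟩ x hx hx'
      obtain ⟨k1, k2⟩ := key i z L x h hx hL
      obtain ⟨k1', k2'⟩ := key i' z' L' x h' hx' hL'
      have e := huniq _ h _ h' _ k1 k1'
      have e1 := List.append_inj' e rfl
      obtain ⟨rfl, e2⟩ := e1
      obtain rfl : z = z' := by simpa using e2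
      have := hnd i z h
      rcases k2 with ⟨rfl, k2⟩ | ⟨rfl, k3, k4⟩ <;> rcases k2' with ⟨rfl, k2'⟩ | ⟨rfl, k3', k4'⟩
      · rfl
      · rcases k2 with k2 | k2
        · exact absurd k3' k2
        · exact absurd (k2 ▸ k4') this
      · rcases k2' with k2 | k2
        · exact absurd k3 k2
        · exact absurd (k2 ▸ k4) this
      · rfl
    · rintro L ⟨i, z, h, rfl | ⟨h1, rfl⟩⟩
      · have hc := hch _ h
        have hz := haC _ h z (by simp)
        rw [show i ++ [z, insert a z] = (i ++ [z]) ++ [insert a z] by simp, List.isChain_append]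
        refine ⟨hc, by simp, ?_⟩
        simp
        exact ⟨a, hz, rfl⟩
      · have hc := (List.isChain_append.1 (hch _ h)).1
        have hi : ∀ x ∈ i, a ∉ x := fun x hx => haC _ h x (by simp [hx])
        rw [List.isChain_map]
        refine List.IsChain.imp_of_mem_imp ?_ hc
        rintro x y hx hy ⟨b, hb, rfl⟩
        refine ⟨b, ?_, Finset.insert_comm _ _ _⟩
        have := hi _ hy
        simp only [mem_insert, not_or] at this ⊢
        exact ⟨fun h => this.1 h.symm, hb⟩
    · rintro L ⟨i, z, h, rfl | ⟨h1, rfl⟩⟩ u hu v hv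
      · have hz := haC _ h z (by simp)
        have := hcard _ h u (by cases i <;> simpa using hu) z (by simp)
        have hv' : insert a z = v := by simpa using hv
        subst hv'
        rw [card_insert_of_notMem ha, card_insert_of_notMem hz]; omega
      · have hi : ∀ x ∈ i, a ∉ x := fun x hx => haC _ h x (by simp [hx])
        rw [List.head?_map, Option.mem_map] at hu
        rw [List.getLast?_map, Option.mem_map] at hv
        obtain ⟨u, hu, rfl⟩ := hu
        obtain ⟨v, hv, rfl⟩ := hv
        have := hcard _ h u (by cases i <;> simp_all) z (by simp)
        have hc := (List.isChain_append.1 (hch _ h)).2.2 v hv z (by simp)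
        obtain ⟨b, hb, rfl⟩ := hc
        rw [card_insert_of_notMem hb] at this
        rw [card_insert_of_notMem ha, card_insert_of_notMem (hi u (List.mem_of_mem_head? hu)),
          card_insert_of_notMem (hi v (List.mem_of_mem_getLast? hv))]
        omega

/-- Generic transfer: a poset fibered into Boolean lattices. -/
theorem scd_transfer {X κ : Type} (cov : X → X → Prop) (key : X → κ) (J : X → Finset ℤ)
    (S : κ → Finset ℤ) (c : X → ℕ) (N : ℕ)
    (hJ : ∀ x, J x ⊆ S (key x))
    (hinj : ∀ x y, key x = key y → J x = J y → x = y)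
    (hsurj : ∀ x T, T ⊆ S (key x) → ∃ y, key y = key x ∧ J y = T)
    (hcov : ∀ x y a, key x = key y → a ∉ J x → J y = insert a (J x) → cov x y)
    (hpos : ∀ x, 1 ≤ c x)
    (hc : ∀ x, 2 * c x + 2 * (J x).card = 2 + N + (S (key x)).card) :
    ∃ chains : Set (List X), [] ∉ chains ∧ (∀ x, ∃! l, l ∈ chains ∧ x ∈ l) ∧
      (∀ l ∈ chains, List.IsChain cov l) ∧
      ∀ l ∈ chains, ∀ h : l ≠ [],
        ((N + 1) - c (l.head h)) + ((N + 1) - c (l.getLast h)) = (N + 1) - 1 := by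
  choose C h0 hsub hex huniq hch hcard using fun k => boolean_scd (S k)
  refine ⟨{L | ∃ k, (∀ x ∈ L, key x = k) ∧ L.map J ∈ C k}, ?_, ?_, ?_, ?_⟩
  · rintro ⟨k, -, h⟩
    exact h0 k (by simpa using h)
  · intro x
    obtain ⟨l, hl, hx⟩ := hex (key x) (J x) (hJ x)
    have lift : ∀ l : List (Finset ℤ), (∀ T ∈ l, T ⊆ S (key x)) →
        ∃ L : List X, (∀ y ∈ L, key y = key x) ∧ L.map J = l := by
      intro l
      induction l with
      | nil => intro _; exact ⟨[], by simp, rfl⟩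
      | cons T l ih =>
        intro h
        obtain ⟨L, h1, h2⟩ := ih (fun T hT => h T (by simp [hT]))
        obtain ⟨y, hy, hy'⟩ := hsurj x T (h T (by simp))
        exact ⟨y :: L, by simpa [hy] using h1, by simp [hy', h2]⟩
    obtain ⟨L, hL, hL'⟩ := lift l (hsub _ l hl)
    have injL : ∀ L L' : List X, (∀ y ∈ L, key y = key x) → (∀ y ∈ L', key y = key x) →
        L.map J = L'.map J → L = L' := by
      intro L
      induction L with
      | nil => intro L' _ _ h; symm; simpa using h.symm
      | cons y L ih =>
        intro L' h1 h2 h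
        cases L' with
        | nil => simp at h
        | cons y' L' =>
          simp only [List.map_cons, List.cons.injEq] at h
          rw [ih L' (fun y hy => h1 y (by simp [hy])) (fun y hy => h2 y (by simp [hy])) h.2,
            hinj y y' ((h1 y (by simp)).trans (h2 y' (by simp)).symm) h.1]
    refine ⟨L, ⟨⟨key x, hL, hL' ▸ hl⟩, ?_⟩, ?_⟩
    · rw [← hL', List.mem_map] at hx
      obtain ⟨y, hy, hyx⟩ := hx
      rwa [← hinj y x (hL y hy) hyx]
    · rintro L' ⟨⟨k, hk, hLC⟩, hxL'⟩
      obtain rfl := hk x hxL'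
      refine injL _ _ hk hL ?_
      rw [hL']
      exact huniq _ _ hLC _ hl (J x) (List.mem_map.2 ⟨x, hxL', rfl⟩) hx
  · rintro L ⟨k, hk, hL⟩
    have := hch k _ hL
    rw [List.isChain_map] at this
    refine List.IsChain.imp_of_mem_imp ?_ this
    rintro x y hx hy ⟨a, ha, h⟩
    exact hcov x y a ((hk x hx).trans (hk y hy).symm) ha h
  · rintro L ⟨k, hk, hL⟩ h
    have e := hcard k _ hL (J (L.head h)) (by simp [List.head?_eq_some_head h])
      (J (L.getLast h)) (by simp [List.getLast?_eq_some_getLast h])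
    have e1 := hc (L.head h)
    have e2 := hc (L.getLast h)
    rw [hk _ (List.head_mem h)] at e1
    rw [hk _ (List.getLast_mem h)] at e2
    have := hpos (L.head h)
    have := hpos (L.getLast h)
    omega

/-- `a` lies on the way from `0` to `b`. -/
def Bel (a b : ℤ) : Prop := (0 ≤ a ∧ a ≤ b) ∨ (b ≤ a ∧ a ≤ 0)

/-- `a` and `b` lie on different open rays. -/
def Opp (a b : ℤ) : Prop := (a < 0 ∧ 0 < b) ∨ (b < 0 ∧ 0 < a)

/-- next point towards `0` -/
def prd (p : ℤ) : ℤ := if 0 < p then p - 1 else if p < 0 then p + 1 else 0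

theorem prd_natAbs {p : ℤ} (h : p ≠ 0) : (prd p).natAbs < p.natAbs := by
  unfold prd; split_ifs <;> omega

/-- The last element of the complement of `T` (or `0`) on the way from `0` to `p`. -/
noncomputable def lastStart (T : Finset ℤ) (p : ℤ) : ℤ :=
  if _h : p = 0 ∨ p ∉ T then p else lastStart T (prd p)
termination_by p.natAbs
decreasing_by exact prd_natAbs (by tauto)

theorem lastStart_self {T : Finset ℤ} {p : ℤ} (h : p = 0 ∨ p ∉ T) : lastStart T p = p := by
  rw [lastStart, dif_pos h]

theorem lastStart_prd {T : Finset ℤ} {p : ℤ} (h0 : p ≠ 0) (h : p ∈ T) :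
    lastStart T p = lastStart T (prd p) := by
  rw [lastStart, dif_neg (by tauto)]

theorem lastStart_spec (T : Finset ℤ) (p : ℤ) :
    Bel (lastStart T p) p ∧ (lastStart T p = 0 ∨ lastStart T p ∉ T) ∧
      ∀ x, Bel x p → (x = 0 ∨ x ∉ T) → Bel x (lastStart T p) := by
  by_cases h : p = 0 ∨ p ∉ T
  · rw [lastStart_self h]
    refine ⟨?_, h, fun x hx _ => hx⟩
    unfold Bel; omega
  · push Not at h
    rw [lastStart_prd h.1 h.2]
    obtain ⟨h1, h2, h3⟩ := lastStart_spec T (prd p)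
    refine ⟨?_, h2, ?_⟩
    · unfold Bel prd at *; split_ifs at * <;> omega
    · intro x hx hx'
      apply h3 x _ hx'
      have : x ≠ p := by rintro rfl; tauto
      unfold Bel prd at *; split_ifs at * <;> omega
termination_by p.natAbs
decreasing_by exact prd_natAbs (by tauto)

theorem Bel.antisymm {a b : ℤ} (h : Bel a b) (h' : Bel b a) : a = b := by
  unfold Bel at *; omega
theorem Bel.trans {a b c : ℤ} (h : Bel a b) (h' : Bel b c) : Bel a c := by
  unfold Bel at *; omega
theorem Bel.refl (a : ℤ) : Bel a a := by
  unfold Bel at *; omega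

theorem lastStart_mono (T : Finset ℤ) {p q : ℤ} (h : Bel p q) :
    Bel (lastStart T p) (lastStart T q) :=
  (lastStart_spec T q).2.2 _ ((lastStart_spec T p).1.trans h) (lastStart_spec T p).2.1

theorem lastStart_comp {T T' : Finset ℤ} (h : T ⊆ T') (p : ℤ) :
    lastStart T' (lastStart T p) = lastStart T' p := by
  obtain ⟨h1, h2, h3⟩ := lastStart_spec T p
  obtain ⟨h1', h2', h3'⟩ := lastStart_spec T' p
  apply Bel.antisymm
  · exact lastStart_mono _ h1
  · refine (lastStart_spec T' _).2.2 _ ?_ h2'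
    exact h3 _ h1' (h2'.imp_right fun hx hy => hx (h hy))

/-- Combinatorial noncrossing relations supported on `[-n, m]`. -/
structure Good (m n : ℕ) (r : ℤ → ℤ → Prop) : Prop where
  eqv : Equivalence r
  supp : ∀ p q, r p q → p = q ∨ (p ∈ Icc (-n : ℤ) m ∧ q ∈ Icc (-n : ℤ) m)
  nc : ∀ a a' b b', Bel a a' → Bel b b' → r a b' → r a' b → r a b

/-- Starts of matched runs. -/
def Mt (r : ℤ → ℤ → Prop) (p : ℤ) : Prop := p ≠ 0 ∧ ¬ r p (prd p) ∧ ∃ q, r p q ∧ Opp p q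

/-- The matching on matched starts. -/
def Ky (r : ℤ → ℤ → Prop) (p q : ℤ) : Prop := Mt r p ∧ Mt r q ∧ r p q

open Classical in
/-- Points joined to their predecessor. -/
noncomputable def Jn (m n : ℕ) (r : ℤ → ℤ → Prop) : Finset ℤ :=
  (Icc (-n : ℤ) m).filter fun p => p ≠ 0 ∧ r p (prd p)

open Classical in
/-- Free positions of a matching. -/
noncomputable def Fr (m n : ℕ) (k : ℤ → ℤ → Prop) : Finset ℤ :=
  (Icc (-n : ℤ) m).filter fun p => p ≠ 0 ∧ ¬ k p p

theorem mem_Jn {m n : ℕ} {r : ℤ → ℤ → Prop} {p : ℤ} : p ∈ Jn m n r ↔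
    p ∈ Icc (-n : ℤ) m ∧ p ≠ 0 ∧ r p (prd p) := by
  classical exact mem_filter

theorem mem_Fr {m n : ℕ} {k : ℤ → ℤ → Prop} {p : ℤ} : p ∈ Fr m n k ↔
    p ∈ Icc (-n : ℤ) m ∧ p ≠ 0 ∧ ¬ k p p := by
  classical exact mem_filter

section
variable {m n : ℕ} {r : ℤ → ℤ → Prop}

theorem Good.notMem_Jn (hr : Good m n r) {p : ℤ} (h : p ≠ 0) :
    p ∉ Jn m n r ↔ ¬ r p (prd p) := by
  rw [mem_Jn]
  constructor
  · intro h1 h2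
    rcases hr.supp _ _ h2 with h3 | h3
    · have := prd_natAbs h
      rw [← h3] at this; omega
    · exact h1 ⟨h3.1, h, h2⟩
  · intro h1 h2
    exact h1 h2.2.2

theorem Good.start_cases (hr : Good m n r) {x y : ℤ} (hx : x = 0 ∨ ¬ r x (prd x))
    (hy : y = 0 ∨ ¬ r y (prd y)) (h : r x y) : x = y ∨ (Opp x y ∧ Ky r x y) := by
  have aux : ∀ x y, (y = 0 ∨ ¬ r y (prd y)) → r x y → Bel x y → x = y := by
    intro x y hy h hb
    by_contra hne
    have hy0 : y ≠ 0 := by rintro rfl; unfold Bel at hb; omega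
    have h1 : Bel x (prd y) := by unfold Bel prd at *; split_ifs <;> omega
    have h2 : Bel (prd y) y := by unfold Bel prd at *; split_ifs <;> omega
    have h3 := hr.nc x (prd y) (prd y) y h1 h2 h (hr.eqv.refl _)
    exact (hy.resolve_left hy0) (hr.eqv.trans (hr.eqv.symm h) h3)
  by_cases h1 : Bel x y
  · exact Or.inl (aux x y hy h h1)
  by_cases h2 : Bel y x
  · exact Or.inl (aux y x hx (hr.eqv.symm h) h2).symm
  right
  have ho : Opp x y := by unfold Bel Opp at *; omega
  have ho' : Opp y x := by unfold Opp at *; omega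
  refine ⟨ho, ⟨?_, hx.resolve_left ?_, y, h, ho⟩, ⟨?_, hy.resolve_left ?_, x, hr.eqv.symm h, ho'⟩, h⟩
  all_goals unfold Opp at ho; omega

theorem Good.rel_last (hr : Good m n r) (p : ℤ) : r p (lastStart (Jn m n r) p) := by
  by_cases h : p = 0 ∨ p ∉ Jn m n r
  · rw [lastStart_self h]; exact hr.eqv.refl _
  · push Not at h
    rw [lastStart_prd h.1 h.2]
    exact hr.eqv.trans (mem_Jn.1 h.2).2.2 (hr.rel_last (prd p))
termination_by p.natAbs
decreasing_by exact prd_natAbs (by tauto)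

theorem Good.last_start (hr : Good m n r) (p : ℤ) : lastStart (Jn m n r) p = 0 ∨
    ¬ r (lastStart (Jn m n r) p) (prd (lastStart (Jn m n r) p)) := by
  by_cases h : lastStart (Jn m n r) p = 0
  · exact Or.inl h
  · exact Or.inr ((hr.notMem_Jn h).1 ((lastStart_spec (Jn m n r) p).2.1.resolve_left h))

theorem Good.iff (hr : Good m n r) (p q : ℤ) : r p q ↔
    lastStart (Jn m n r) p = lastStart (Jn m n r) q ∨
      Ky r (lastStart (Jn m n r) p) (lastStart (Jn m n r) q) := by
  have hp := hr.rel_last p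
  have hq := hr.rel_last q
  constructor
  · intro h
    exact (hr.start_cases (hr.last_start p) (hr.last_start q)
      (hr.eqv.trans (hr.eqv.symm hp) (hr.eqv.trans h hq))).imp_right And.right
  · rintro (h | h)
    · rw [h] at hp; exact hr.eqv.trans hp (hr.eqv.symm hq)
    · exact hr.eqv.trans hp (hr.eqv.trans h.2.2 (hr.eqv.symm hq))

theorem Good.Jn_subset (_hr : Good m n r) : Jn m n r ⊆ Fr m n (Ky r) := by
  intro p hp
  rw [mem_Fr]; rw [mem_Jn] at hp
  exact ⟨hp.1, hp.2.1, fun h => h.1.2.1 hp.2.2⟩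

theorem Good.ext {r' : ℤ → ℤ → Prop} (hr : Good m n r) (hr' : Good m n r')
    (hk : Ky r = Ky r') (hJ : Jn m n r = Jn m n r') : r = r' := by
  funext p q
  rw [eq_iff_iff, hr.iff, hr'.iff, hk, hJ]

theorem Mt.Ky_self (hr : Good m n r) {p : ℤ} (h : Mt r p) : Ky r p p := ⟨h, h, hr.eqv.refl _⟩

theorem Good.le {r' : ℤ → ℤ → Prop} (hr : Good m n r) (hr' : Good m n r')
    (hk : Ky r = Ky r') (hJ : Jn m n r ⊆ Jn m n r') {p q : ℤ} (h : r p q) : r' p q := by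
  rw [hr'.iff, ← lastStart_comp hJ p, ← lastStart_comp hJ q]
  rcases (hr.iff p q).1 h with h | h
  · rw [h]; exact Or.inl rfl
  · right
    rw [hk] at h
    rw [lastStart_self (Or.inr ((hr'.notMem_Jn h.1.1).2 h.1.2.1)),
      lastStart_self (Or.inr ((hr'.notMem_Jn h.2.1.1).2 h.2.1.2.1))]
    exact h

theorem Good.partner (hr : Good m n r) {p : ℤ} (h : Mt r p) : ∃ t, Ky r p t ∧ Opp p t := by
  obtain ⟨h1, h2, q, hq, ho⟩ := h
  have h3 := hr.rel_last q
  have hb := (lastStart_spec (Jn m n r) q).1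
  refine ⟨lastStart (Jn m n r) q, ?_⟩
  rcases hr.start_cases (Or.inr h2) (hr.last_start q) (hr.eqv.trans hq h3) with h | h
  · rw [← h] at hb; unfold Bel Opp at *; omega
  · exact h.symm

theorem Mt.mem (hr : Good m n r) {p : ℤ} (h : Mt r p) : p ∈ Icc (-n : ℤ) m := by
  obtain ⟨h1, h2, q, hq, ho⟩ := h
  rcases hr.supp _ _ hq with rfl | h
  · unfold Opp at ho; omega
  · exact h.1

theorem Good.surj (hr : Good m n r) {T : Finset ℤ} (hT : T ⊆ Fr m n (Ky r)) :
    ∃ r', Good m n r' ∧ Ky r' = Ky r ∧ Jn m n r' = T := by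
  have hTM : ∀ p, Mt r p → p ∉ T := by
    intro p hp hpT
    have := hT hpT
    exact (mem_Fr.1 this).2.2 (hp.Ky_self hr)
  have hTD : ∀ p, p ∈ T → p ∈ Icc (-n : ℤ) m ∧ p ≠ 0 := by
    intro p hpT
    have := hT hpT
    exact ⟨(mem_Fr.1 this).1, (mem_Fr.1 this).2.1⟩
  have hsM : ∀ p, Mt r p → lastStart T p = p := fun p hp => lastStart_self (Or.inr (hTM p hp))
  set r' : ℤ → ℤ → Prop := fun p q => lastStart T p = lastStart T q ∨
    Ky r (lastStart T p) (lastStart T q) with hr'def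
  have hMM : ∀ x y, Ky r x y → Bel x y → x = y := by
    intro x y h hb
    rcases hr.start_cases (Or.inr h.1.2.1) (Or.inr h.2.1.2.1) h.2.2 with h | ⟨h, -⟩
    · exact h
    · unfold Bel Opp at *; omega
  have hsymm : ∀ x y, Ky r x y → Ky r y x := fun x y h => ⟨h.2.1, h.1, hr.eqv.symm h.2.2⟩
  have hg : Good m n r' := by
    refine ⟨⟨fun p => Or.inl rfl, ?_, ?_⟩, ?_, ?_⟩
    · rintro p q (h | h)
      · exact Or.inl h.symm
      · exact Or.inr (hsymm _ _ h)
    · rintro p q t (h | h) (h' | h')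
      · exact Or.inl (h.trans h')
      · right; rw [h]; exact h'
      · right; rw [← h']; exact h
      · exact Or.inr ⟨h.1, h'.2.1, hr.eqv.trans h.2.2 h'.2.2⟩
    · have aux : ∀ p q, r' p q → p ∈ Icc (-n : ℤ) m → p = q ∨ q ∈ Icc (-n : ℤ) m := by
        intro p q h hp
        by_cases hq : q ∈ T
        · exact Or.inr (hTD q hq).1
        have hq' := lastStart_self (Or.inr hq)
        rcases h with h | h
        · have := (lastStart_spec T p).1
          right
          rw [h, hq'] at this
          rw [mem_Icc] at *
          unfold Bel at this; omega
        · rw [hq'] at h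
          exact Or.inr (h.2.1.mem hr)
      intro p q h
      have h' : r' q p := h.imp Eq.symm (hsymm _ _)
      by_cases hp : p ∈ Icc (-n : ℤ) m
      · have := aux p q h hp; tauto
      by_cases hq : q ∈ Icc (-n : ℤ) m
      · have := aux q p h' hq; tauto
      left
      have e1 := lastStart_self (Or.inr fun hpT => hp (hTD p hpT).1)
      have e2 := lastStart_self (Or.inr fun hpT => hq (hTD q hpT).1)
      rcases h with h | h
      · rw [← e1, ← e2, h]
      · rw [e1, e2] at h; exact absurd (h.1.mem hr) hp
    · intro a a' b b' ha hb h1 h2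
      have ha := lastStart_mono T ha
      have hb := lastStart_mono T hb
      simp only [hr'def] at h1 h2 ⊢
      generalize lastStart T a = A at *
      generalize lastStart T b = B at *
      generalize lastStart T a' = A' at *
      generalize lastStart T b' = B' at *
      rcases h1 with rfl | h1 <;> rcases h2 with rfl | h2
      · exact Or.inl (ha.antisymm hb)
      · obtain rfl := hMM _ _ (hsymm _ _ h2) (hb.trans ha)
        exact Or.inl (ha.antisymm hb)
      · obtain rfl := hMM _ _ h1 (ha.trans hb)
        exact Or.inl (ha.antisymm hb)
      · exact Or.inr ⟨h1.1, h2.2.1, hr.nc _ _ _ _ ha hb h1.2.2 h2.2.2⟩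
  have hstart : ∀ p, p ≠ 0 → (r' p (prd p) ↔ p ∈ T) := by
    intro p hp
    constructor
    · intro h
      by_contra hpT
      have h1 := (lastStart_spec T (prd p)).1
      have h2 : Bel (prd p) p := by unfold Bel prd; split_ifs <;> omega
      have h3 := h1.trans h2
      simp only [hr'def] at h
      rw [lastStart_self (Or.inr hpT)] at h
      have : lastStart T (prd p) = p := by
        rcases h with h | h
        · exact h.symm
        · exact hMM _ _ (hsymm _ _ h) h3
      rw [this] at h1
      have := prd_natAbs hp
      unfold Bel at h1; omega
    · intro h
      exact Or.inl (lastStart_prd hp h)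
  refine ⟨r', hg, ?_, ?_⟩
  · have hM : ∀ p, Mt r' p ↔ Mt r p := by
      intro p
      constructor
      · rintro ⟨h1, h2, q, h3, h4⟩
        rw [hstart p h1] at h2
        simp only [hr'def] at h3
        rw [lastStart_self (Or.inr h2)] at h3
        rcases h3 with h3 | h3
        · have := (lastStart_spec T q).1
          rw [← h3] at this; unfold Bel Opp at *; omega
        · exact h3.1
      · intro h
        refine ⟨h.1, ?_, ?_⟩
        · rw [hstart p h.1]; exact hTM p h
        · obtain ⟨t, ht, ho⟩ := hr.partner h
          refine ⟨t, Or.inr ?_, ho⟩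
          rw [hsM p h, hsM t ht.2.1]; exact ht
    funext p q
    rw [eq_iff_iff]
    unfold Ky
    rw [hM, hM]
    refine and_congr_right fun hp => and_congr_right fun hq => ?_
    simp only [hr'def]
    rw [hsM p hp, hsM q hq]
    constructor
    · rintro (rfl | h)
      · exact hr.eqv.refl _
      · exact h.2.2
    · exact fun h => Or.inr ⟨hp, hq, h⟩
  · ext p
    rw [mem_Jn]
    constructor
    · rintro ⟨-, h1, h2⟩
      exact (hstart p h1).1 h2
    · intro h
      have := hTD p h
      exact ⟨this.1, this.2, (hstart p this.2).2 h⟩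

open Classical in
/-- Canonical representatives of the blocks. -/
noncomputable def BRep (m n : ℕ) (r : ℤ → ℤ → Prop) (e : ℤ) : Finset ℤ :=
  (Icc (-n : ℤ) m).filter fun p => p = 0 ∨ (¬ r p (prd p) ∧ (¬ Mt r p ∨ 0 < e * p))

theorem mem_BRep {e p : ℤ} : p ∈ BRep m n r e ↔
    p ∈ Icc (-n : ℤ) m ∧ (p = 0 ∨ (¬ r p (prd p) ∧ (¬ Mt r p ∨ 0 < e * p))) := by
  classical exact mem_filter

theorem Good.BRep_inj (hr : Good m n r) {e : ℤ} {p q : ℤ}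
    (hp : p ∈ BRep m n r e) (hq : q ∈ BRep m n r e) (h : r p q) : p = q := by
  rw [mem_BRep] at hp hq
  rcases hr.start_cases (hp.2.imp_right And.left) (hq.2.imp_right And.left) h with h | ⟨h, h'⟩
  · exact h
  · have h1 := h'.1
    have h2 := h'.2.1
    have h3 : 0 < e * p := by
      rcases hp.2 with h0 | h0
      · exact absurd h0 h1.1
      · tauto
    have h4 : 0 < e * q := by
      rcases hq.2 with h0 | h0
      · exact absurd h0 h2.1
      · tauto
    exfalso
    unfold Opp at h
    rcases h with h | h <;> rcases lt_trichotomy e 0 with he | he | he <;> nlinarith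

theorem Good.BRep_surj (hr : Good m n r) {e : ℤ} (he : e = 1 ∨ e = -1) {p : ℤ}
    (hp : p ∈ Icc (-n : ℤ) m) : ∃ q ∈ BRep m n r e, r p q := by
  have h1 := hr.rel_last p
  have h2 := hr.last_start p
  have h3 : lastStart (Jn m n r) p ∈ Icc (-n : ℤ) m := by
    rcases hr.supp _ _ h1 with h | h
    · rwa [← h]
    · exact h.2
  generalize lastStart (Jn m n r) p = s at *
  by_cases h : s ∈ BRep m n r e
  · exact ⟨s, h, h1⟩
  · have hM : Mt r s ∧ ¬ 0 < e * s := by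
      rw [mem_BRep] at h; tauto
    obtain ⟨t, ht, ho⟩ := hr.partner hM.1
    refine ⟨t, ?_, hr.eqv.trans h1 ht.2.2⟩
    rw [mem_BRep]
    refine ⟨ht.2.1.mem hr, Or.inr ⟨ht.2.1.2.1, Or.inr ?_⟩⟩
    unfold Opp at ho
    rcases he with rfl | rfl <;> omega

theorem Good.count (hr : Good m n r) : (BRep m n r 1).card + (BRep m n r (-1)).card
    + 2 * (Jn m n r).card = 2 + (m + n) + (Fr m n (Ky r)).card := by
  classical
  have hz : ((Icc (-n : ℤ) m).filter (fun p => p = 0)).card = 1 := by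
    rw [Finset.card_eq_one]
    refine ⟨0, ?_⟩
    ext p
    rw [mem_filter, mem_singleton, mem_Icc]
    omega
  have hD : (Icc (-n : ℤ) m).card = m + n + 1 := by
    rw [Int.card_Icc]; omega
  suffices (BRep m n r 1).card + (BRep m n r (-1)).card + 2 * (Jn m n r).card =
      (Icc (-n : ℤ) m).card + (Fr m n (Ky r)).card +
        ((Icc (-n : ℤ) m).filter (fun p => p = 0)).card by omega
  unfold BRep Jn Fr
  simp only [Finset.card_filter]
  rw [Finset.card_eq_sum_ones, Finset.mul_sum, ← Finset.sum_add_distrib,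
    ← Finset.sum_add_distrib, ← Finset.sum_add_distrib, ← Finset.sum_add_distrib]
  refine Finset.sum_congr rfl fun p _ => ?_
  by_cases h0 : p = 0
  · simp [h0]
  by_cases h1 : r p (prd p)
  · have : ¬ Ky r p p := fun h => h.1.2.1 h1
    simp [h0, h1, this]
  by_cases h2 : Mt r p
  · have : Ky r p p := h2.Ky_self hr
    rcases lt_or_gt_of_ne h0 with h | h
    · have h' : ¬ 0 < p := by omega
      simp [h0, h1, h2, this, h, h']
    · have h' : ¬ p < 0 := by omega
      simp [h0, h1, h2, this, h, h']
  · have : ¬ Ky r p p := fun h => h2 h.1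
    simp [h0, h1, h2, this]

end

/-- The point with (signed) index `p`. -/
noncomputable def pt (p : ℤ) : ℂ := ⟨((max p 0 : ℤ) : ℝ), ((max (-p) 0 : ℤ) : ℝ)⟩

theorem pt_nonneg {p : ℤ} (h : 0 ≤ p) : pt p = ⟨(p : ℝ), 0⟩ := by
  unfold pt; rw [max_eq_left h, max_eq_right (by omega)]; simp

theorem pt_nonpos {p : ℤ} (h : p ≤ 0) : pt p = ⟨0, -(p : ℝ)⟩ := by
  unfold pt; rw [max_eq_right h, max_eq_left (by omega)]; simp

theorem pt_inj : Function.Injective pt := by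
  intro p q h
  unfold pt at h
  rw [Complex.mk.injEq, Int.cast_inj, Int.cast_inj] at h
  omega

theorem Vconfig_eq (m n : ℕ) : Vconfig m n = (Icc (-n : ℤ) m).image pt := by
  ext z
  unfold Vconfig Uconfig
  simp only [mem_insert, mem_union, mem_image, mem_Icc]
  constructor
  · rintro (rfl | ⟨j, hj, rfl⟩ | ⟨j, hj, rfl⟩)
    · exact ⟨0, by omega, by rw [pt_nonneg le_rfl]; apply Complex.ext <;> simp⟩
    · exact ⟨j, by omega, by rw [pt_nonneg (by omega)]; apply Complex.ext <;> simp⟩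
    · exact ⟨-j, by omega, by rw [pt_nonpos (by omega)]; apply Complex.ext <;> simp⟩
  · rintro ⟨p, hp, rfl⟩
    rcases lt_trichotomy p 0 with h | rfl | h
    · right; right
      obtain ⟨k, rfl⟩ : ∃ k : ℕ, p = -k := ⟨p.natAbs, by omega⟩
      exact ⟨k, by omega, by rw [pt_nonpos (by omega)]; apply Complex.ext <;> simp⟩
    · left; rw [pt_nonneg le_rfl]; apply Complex.ext <;> simp
    · right; left
      obtain ⟨k, rfl⟩ : ∃ k : ℕ, p = k := ⟨p.natAbs, by omega⟩
      exact ⟨k, by omega, by rw [pt_nonneg (by omega)]; apply Complex.ext <;> simp⟩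

theorem pt_mem {m n : ℕ} {p : ℤ} : pt p ∈ Vconfig m n ↔ p ∈ Icc (-n : ℤ) m := by
  rw [Vconfig_eq]; exact Function.Injective.mem_finset_image pt_inj

theorem Bel.mem {m n : ℕ} {a b : ℤ} (h : Bel a b) (hb : b ∈ Icc (-n : ℤ) m) :
    a ∈ Icc (-n : ℤ) m := by
  rw [mem_Icc] at *; unfold Bel at h; omega

theorem real_between {a b c : ℝ} (h : a ≤ b) (h' : b ≤ c) :
    ∃ s t : ℝ, 0 ≤ s ∧ 0 ≤ t ∧ s + t = 1 ∧ s * a + t * c = b := by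
  have : b ∈ segment ℝ a c := by rw [segment_eq_Icc (h.trans h')]; exact ⟨h, h'⟩
  simpa [segment] using this

theorem pt_mem_segment {a b c : ℤ} (h : Bel a b) (h' : Bel b c) :
    pt b ∈ segment ℝ (pt a) (pt c) := by
  unfold Bel at *
  by_cases hb : 0 ≤ a ∧ 0 ≤ b ∧ 0 ≤ c
  · rw [pt_nonneg hb.1, pt_nonneg hb.2.1, pt_nonneg hb.2.2]
    obtain ⟨s, t, h1, h2, h3, h4⟩ := real_between (a := a) (b := b) (c := c)
      (by exact_mod_cast (by omega)) (by exact_mod_cast (by omega))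
    exact ⟨s, t, h1, h2, h3, by apply Complex.ext <;> simp [h4]⟩
  · rw [pt_nonpos (by omega : a ≤ 0), pt_nonpos (by omega : b ≤ 0), pt_nonpos (by omega : c ≤ 0)]
    obtain ⟨s, t, h1, h2, h3, h4⟩ := real_between (a := c) (b := b) (c := a)
      (by exact_mod_cast (by omega)) (by exact_mod_cast (by omega))
    exact ⟨t, s, h2, h1, by linarith, by apply Complex.ext <;> simp; linarith⟩

theorem cross_aux {a a' b b' : ℤ} (ha : 0 < a) (haa : a ≤ a') (hb : b < 0) (hbb : b' ≤ b) :
    ∃ z, z ∈ segment ℝ (pt a) (pt b') ∧ z ∈ segment ℝ (pt a') (pt b) := by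
  by_cases he : a = a' ∧ b = b'
  · obtain ⟨rfl, rfl⟩ := he
    exact ⟨pt a, left_mem_segment _ _ _, left_mem_segment _ _ _⟩
  rw [pt_nonneg ha.le, pt_nonneg (by omega : 0 ≤ a'), pt_nonpos hb.le,
    pt_nonpos (by omega : b' ≤ 0)]
  have h1 : (0 : ℝ) < a := by exact_mod_cast ha
  have h2 : (a : ℝ) ≤ a' := by exact_mod_cast haa
  have h3 : (b : ℝ) < 0 := by exact_mod_cast hb
  have h4 : (b' : ℝ) ≤ b := by exact_mod_cast hbb
  have hD : (0 : ℝ) < a' * (-b') - a * (-b) := by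
    have : (0 : ℤ) < a' * (-b') - a * (-b) := by
      by_cases h : a = a'
      · have : b' < b := by omega
        subst h; nlinarith
      · have : a < a' := by omega
        nlinarith
    exact_mod_cast this
  generalize (a : ℝ) = x at *
  generalize (a' : ℝ) = x' at *
  generalize (b : ℝ) = y at *
  generalize (b' : ℝ) = y' at *
  set D := x' * (-y') - x * (-y) with hDdef
  refine ⟨⟨x * (x' * (y - y') / D), -y' * (-y * (x' - x) / D)⟩,
    ⟨x' * (y - y') / D, -y * (x' - x) / D, ?_, ?_, ?_, ?_⟩,
    ⟨x * (y - y') / D, -y' * (x' - x) / D, ?_, ?_, ?_, ?_⟩⟩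
  · exact div_nonneg (mul_nonneg (by linarith) (by linarith)) hD.le
  · exact div_nonneg (mul_nonneg (by linarith) (by linarith)) hD.le
  · rw [← add_div, div_eq_one_iff_eq hD.ne', hDdef]; ring
  · apply Complex.ext <;> simp <;> ring
  · exact div_nonneg (mul_nonneg (by linarith) (by linarith)) hD.le
  · exact div_nonneg (mul_nonneg (by linarith) (by linarith)) hD.le
  · rw [← add_div, div_eq_one_iff_eq hD.ne', hDdef]; ring
  · apply Complex.ext <;> simp <;> ring

theorem cross {a a' b b' : ℤ} (ha : Bel a a') (hb : Bel b b') :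
    ∃ z, z ∈ segment ℝ (pt a) (pt b') ∧ z ∈ segment ℝ (pt a') (pt b) := by
  by_cases h1 : Bel a b
  · exact ⟨pt b, pt_mem_segment h1 hb, right_mem_segment _ _ _⟩
  by_cases h2 : Bel b a
  · exact ⟨pt a, left_mem_segment _ _ _, by rw [segment_symm]; exact pt_mem_segment h2 ha⟩
  unfold Bel at *
  by_cases h3 : 0 < a
  · exact cross_aux h3 (by omega) (by omega) (by omega)
  · obtain ⟨z, hz, hz'⟩ := cross_aux (a := b) (a' := b') (b := a) (b' := a')
      (by omega) (by omega) (by omega) (by omega)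
    exact ⟨z, by rwa [segment_symm], by rwa [segment_symm]⟩

theorem hull_disjoint (P Q : Finset ℤ) (hP : P.Nonempty)
    (h : ∀ p ∈ P, ∀ q ∈ Q, ¬ Bel q p) :
    Disjoint (convexHull ℝ (pt '' P)) (convexHull ℝ (pt '' Q)) := by
  obtain ⟨p0, hp0, hmax⟩ := P.exists_max_image id hP
  obtain ⟨p1, hp1, hmin⟩ := P.exists_min_image id hP
  simp only [id] at hmax hmin
  obtain ⟨s, hs0, hsP, hsQ⟩ : ∃ s : ℤ, 0 < s ∧ (∀ p ∈ P, 0 ≤ p → p < s) ∧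
      ∀ q ∈ Q, 0 ≤ q → s ≤ q := by
    refine ⟨max p0 0 + 1, by omega, fun p hp _ => by have := hmax p hp; omega, fun q hq _ => ?_⟩
    have := h p0 hp0 q hq
    unfold Bel at this; omega
  obtain ⟨t, ht0, htP, htQ⟩ : ∃ s : ℤ, 0 < s ∧ (∀ p ∈ P, p ≤ 0 → -p < s) ∧
      ∀ q ∈ Q, q ≤ 0 → s ≤ -q := by
    refine ⟨max (-p1) 0 + 1, by omega, fun p hp _ => by have := hmin p hp; omega, fun q hq _ => ?_⟩
    have := h p1 hp1 q hq
    unfold Bel at this; omega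
  have hlin : IsLinearMap ℝ (fun z : ℂ => (t : ℝ) * z.re + (s : ℝ) * z.im) :=
    ⟨fun x y => by simp; ring, fun c x => by simp; ring⟩
  have hs0' : (0 : ℝ) < s := by exact_mod_cast hs0
  have ht0' : (0 : ℝ) < t := by exact_mod_cast ht0
  have c1 : convexHull ℝ (pt '' P) ⊆ {z : ℂ | (t : ℝ) * z.re + (s : ℝ) * z.im < s * t} := by
    refine convexHull_min ?_ (convex_halfSpace_lt hlin _)
    rintro _ ⟨p, hp, rfl⟩
    rcases le_total 0 p with h0 | h0
    · have : (p : ℝ) < s := by exact_mod_cast hsP p hp h0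
      rw [pt_nonneg h0]; simp only [Set.mem_ofPred_eq]; nlinarith
    · have : -(p : ℝ) < t := by exact_mod_cast htP p hp h0
      rw [pt_nonpos h0]; simp only [Set.mem_ofPred_eq]; nlinarith
  have c2 : convexHull ℝ (pt '' Q) ⊆ {z : ℂ | (s * t : ℝ) ≤ (t : ℝ) * z.re + (s : ℝ) * z.im} := by
    refine convexHull_min ?_ (convex_halfSpace_ge hlin _)
    rintro _ ⟨p, hp, rfl⟩
    rcases le_total 0 p with h0 | h0
    · have : (s : ℝ) ≤ p := by exact_mod_cast hsQ p hp h0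
      rw [pt_nonneg h0]; simp only [Set.mem_ofPred_eq]; nlinarith
    · have : (t : ℝ) ≤ -p := by exact_mod_cast htQ p hp h0
      rw [pt_nonpos h0]; simp only [Set.mem_ofPred_eq]; nlinarith
  refine Disjoint.mono c1 c2 ?_
  rw [Set.disjoint_left]
  intro z hz hz'
  rw [Set.mem_ofPred_eq] at hz hz'
  linarith

/-- The relation on indices given by a noncrossing partition. -/
def rel {m n : ℕ} (π : NC (Vconfig m n)) (p q : ℤ) : Prop := p = q ∨ π.SameBlock (pt p) (pt q)

theorem SameBlock.mem {P : Finset ℂ} {π : NC P} {x y : ℂ} (h : π.SameBlock x y) :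
    x ∈ P ∧ y ∈ P := by
  obtain ⟨B, hB, hx, hy⟩ := h
  exact ⟨π.1.subset hB hx, π.1.subset hB hy⟩

theorem SameBlock.refl {P : Finset ℂ} {π : NC P} {x : ℂ} (h : x ∈ P) : π.SameBlock x x := by
  obtain ⟨B, hB, hx⟩ := π.1.exists_mem h
  exact ⟨B, hB, hx, hx⟩

theorem rel_good {m n : ℕ} (π : NC (Vconfig m n)) : Good m n (rel π) := by
  refine ⟨⟨fun p => Or.inl rfl, ?_, ?_⟩, ?_, ?_⟩
  · rintro p q (rfl | ⟨B, hB, h1, h2⟩)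
    · exact Or.inl rfl
    · exact Or.inr ⟨B, hB, h2, h1⟩
  · rintro p q t (rfl | ⟨B, hB, h1, h2⟩) (rfl | ⟨B', hB', h1', h2'⟩)
    · exact Or.inl rfl
    · exact Or.inr ⟨B', hB', h1', h2'⟩
    · exact Or.inr ⟨B, hB, h1, h2⟩
    · obtain rfl := π.1.eq_of_mem_parts hB hB' h2 h1'
      exact Or.inr ⟨B, hB, h1, h2'⟩
  · rintro p q (rfl | h)
    · exact Or.inl rfl
    · right
      rw [← pt_mem, ← pt_mem]
      exact SameBlock.mem h
  · intro a a' b b' ha hb h1 h2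
    have main : π.SameBlock (pt a) (pt b') → π.SameBlock (pt a') (pt b) → rel π a b := by
      rintro ⟨B, hB, k1, k2⟩ ⟨B', hB', k1', k2'⟩
      by_cases e : B = B'
      · subst e; exact Or.inr ⟨B, hB, k1, k2'⟩
      · exfalso
        obtain ⟨z, hz, hz'⟩ := cross ha hb
        have hd := Set.disjoint_left.1 (π.2 hB hB' e)
        exact hd (segment_subset_convexHull k1 k2 hz) (segment_subset_convexHull k1' k2' hz')
    rcases h1 with rfl | h1 <;> rcases h2 with rfl | h2
    · exact Or.inl (ha.antisymm hb)
    · refine main (SameBlock.refl ?_) h2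
      rw [pt_mem]
      exact ha.mem (pt_mem.1 (SameBlock.mem h2).1)
    · refine main h1 (SameBlock.refl ?_)
      rw [pt_mem]
      exact hb.mem (pt_mem.1 (SameBlock.mem h1).2)
    · exact main h1 h2

theorem rel_surj {m n : ℕ} {r : ℤ → ℤ → Prop} (hr : Good m n r) :
    ∃ π : NC (Vconfig m n), rel π = r := by
  classical
  let s : Setoid ℂ := Setoid.comap (Function.invFun pt) ⟨r, hr.eqv⟩
  have hs : ∀ p q, s (pt p) (pt q) ↔ r p q := by
    intro p q
    change r (Function.invFun pt (pt p)) (Function.invFun pt (pt q)) ↔ _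
    rw [Function.leftInverse_invFun pt_inj p, Function.leftInverse_invFun pt_inj q]
  let π := Finpartition.ofSetSetoid s (Vconfig m n)
  have hparts : ∀ B, B ∈ π.parts ↔ ∃ a ∈ Icc (-n : ℤ) m,
      B = ((Icc (-n : ℤ) m).filter (fun q => r a q)).image pt := by
    intro B
    change B ∈ (Vconfig m n).image (fun a => (Vconfig m n).filter (fun b => s a b)) ↔ _
    rw [mem_image]
    have aux : ∀ a, (Vconfig m n).filter (fun b => s (pt a) b) =
        ((Icc (-n : ℤ) m).filter (fun q => r a q)).image pt := by
      intro a
      rw [Vconfig_eq, Finset.filter_image]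
      congr 1
      ext q
      rw [mem_filter, mem_filter, hs]
    constructor
    · rintro ⟨x, hx, rfl⟩
      rw [Vconfig_eq, mem_image] at hx
      obtain ⟨a, ha, rfl⟩ := hx
      exact ⟨a, ha, aux a⟩
    · rintro ⟨a, ha, rfl⟩
      exact ⟨pt a, pt_mem.2 ha, aux a⟩
  have hnc : IsNoncrossing π := by
    intro B hB B' hB' hne
    obtain ⟨a, ha, rfl⟩ := (hparts B).1 hB
    obtain ⟨a', ha', rfl⟩ := (hparts B').1 hB'
    have hna : ¬ r a a' := by
      intro h
      apply hne
      congr 1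
      ext q
      rw [mem_filter, mem_filter]
      refine and_congr_right fun _ => ?_
      exact ⟨hr.eqv.trans (hr.eqv.symm h), hr.eqv.trans h⟩
    have hna' : ∀ x y, r a x → r a' y → ¬ r x y := fun x y hx hy h =>
      hna (hr.eqv.trans hx (hr.eqv.trans h (hr.eqv.symm hy)))
    simp only [Finset.coe_image]
    by_cases h : ∀ p ∈ (Icc (-n : ℤ) m).filter (fun q => r a q),
        ∀ q ∈ (Icc (-n : ℤ) m).filter (fun q => r a' q), ¬ Bel q p
    · exact hull_disjoint _ _ ⟨a, mem_filter.2 ⟨ha, hr.eqv.refl _⟩⟩ h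
    · refine (hull_disjoint _ _ ⟨a', mem_filter.2 ⟨ha', hr.eqv.refl _⟩⟩ ?_).symm
      push Not at h
      obtain ⟨p1, hp1, q1, hq1, hb1⟩ := h
      intro q2 hq2 p2 hp2 hb2
      rw [mem_filter] at *
      refine hna' p2 q1 hp2.2 hq1.2 (hr.eqv.symm ?_)
      exact hr.nc q1 p1 p2 q2 hb1 hb2 (hr.eqv.trans (hr.eqv.symm hq1.2) hq2.2)
        (hr.eqv.trans (hr.eqv.symm hp1.2) hp2.2)
  refine ⟨⟨π, hnc⟩, ?_⟩
  funext p q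
  rw [eq_iff_iff]
  constructor
  · rintro (rfl | ⟨B, hB, h1, h2⟩)
    · exact hr.eqv.refl _
    · obtain ⟨a, ha, rfl⟩ := (hparts B).1 hB
      rw [Function.Injective.mem_finset_image pt_inj, mem_filter] at h1 h2
      exact hr.eqv.trans (hr.eqv.symm h1.2) h2.2
  · intro h
    rcases hr.supp _ _ h with rfl | ⟨hp, hq⟩
    · exact Or.inl rfl
    · refine Or.inr ⟨_, (hparts _).2 ⟨p, hp, rfl⟩, ?_, ?_⟩
      · exact mem_image_of_mem _ (mem_filter.2 ⟨hp, hr.eqv.refl _⟩)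
      · exact mem_image_of_mem _ (mem_filter.2 ⟨hq, h⟩)

theorem le_of_rel {m n : ℕ} {π π' : NC (Vconfig m n)} (h : ∀ p q, rel π p q → rel π' p q) :
    π ≤ π' := by
  change π.1 ≤ π'.1
  intro B hB
  obtain ⟨x, hx⟩ := π.1.nonempty_of_mem_parts hB
  have hxV := π.1.subset hB hx
  obtain ⟨B', hB', hx'⟩ := π'.1.exists_mem hxV
  refine ⟨B', hB', ?_⟩
  intro y hy
  have hyV := π.1.subset hB hy
  rw [Vconfig_eq, mem_image] at hxV hyV
  obtain ⟨p, hp, rfl⟩ := hxV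
  obtain ⟨q, hq, rfl⟩ := hyV
  rcases h p q (Or.inr ⟨B, hB, hx, hy⟩) with rfl | ⟨B'', hB'', h1, h2⟩
  · exact hx'
  · rwa [π'.1.eq_of_mem_parts hB' hB'' hx' h1]

theorem rel_inj {m n : ℕ} {π π' : NC (Vconfig m n)} (h : rel π = rel π') : π = π' :=
  le_antisymm (le_of_rel fun p q => by rw [h]; exact id) (le_of_rel fun p q => by rw [h]; exact id)

theorem card_lt_of_lt {s : Finset ℂ} {P Q : Finpartition s} (h : P < Q) :
    Q.parts.card < P.parts.card := by
  refine lt_of_le_of_ne (Finpartition.card_mono h.le) fun heq => ?_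
  have hex : ∀ b ∈ Q.parts, ∃ c ∈ P.parts, c ≤ b := fun b hb => Finpartition.exists_le_of_le h.le hb
  choose! f hf hfb using hex
  have hinj : Set.InjOn f Q.parts := by
    intro b hb b' hb' e
    obtain ⟨x, hx⟩ := P.nonempty_of_mem_parts (hf b hb)
    exact Q.eq_of_mem_parts hb hb' (hfb b hb hx) (hfb b' hb' (e ▸ hx))
  have himg : Q.parts.image f = P.parts := by
    apply Finset.eq_of_subset_of_card_le
    · intro c hc
      obtain ⟨b, hb, rfl⟩ := mem_image.1 hc
      exact hf b hb
    · rw [Finset.card_image_of_injOn hinj, heq]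
  have hsum : ∑ b ∈ Q.parts, (f b).card = ∑ b ∈ Q.parts, b.card := by
    rw [Q.sum_card_parts, ← P.sum_card_parts, ← himg, Finset.sum_image hinj]
  have hle : ∀ b ∈ Q.parts, (f b).card ≤ b.card := fun b hb => Finset.card_le_card (hfb b hb)
  have heach := (Finset.sum_eq_sum_iff_of_le hle).1 hsum
  apply h.not_ge
  intro b hb
  refine ⟨f b, hf b hb, ?_⟩
  rw [Finset.eq_of_subset_of_card_le (hfb b hb) (heach b hb).ge]

theorem card_parts_eq {m n : ℕ} (π : NC (Vconfig m n)) {e : ℤ} (he : e = 1 ∨ e = -1) :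
    π.parts.card = (BRep m n (rel π) e).card := by
  symm
  have hr := rel_good π
  have hmem : ∀ p ∈ BRep m n (rel π) e, pt p ∈ Vconfig m n := fun p hp =>
    pt_mem.2 (mem_BRep.1 hp).1
  refine Finset.card_bij (fun p _ => π.1.part (pt p)) ?_ ?_ ?_
  · intro p hp
    exact π.1.part_mem.2 (hmem p hp)
  · intro p hp q hq h
    refine hr.BRep_inj hp hq (Or.inr ⟨_, π.1.part_mem.2 (hmem p hp), ?_, ?_⟩)
    · exact π.1.mem_part_self.2 (hmem p hp)
    · rw [h]; exact π.1.mem_part_self.2 (hmem q hq)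
  · intro B hB
    obtain ⟨x, hx⟩ := π.1.nonempty_of_mem_parts hB
    have hxV := π.1.subset hB hx
    rw [Vconfig_eq, mem_image] at hxV
    obtain ⟨p, hp, rfl⟩ := hxV
    obtain ⟨q, hq, hpq⟩ := hr.BRep_surj he hp
    refine ⟨q, hq, ?_⟩
    apply π.1.part_eq_of_mem hB
    rcases hpq with rfl | ⟨B', hB', h1, h2⟩
    · exact hx
    · rwa [π.1.eq_of_mem_parts hB hB' hx h1]

theorem card_formula {m n : ℕ} (π : NC (Vconfig m n)) :
    2 * π.parts.card + 2 * (Jn m n (rel π)).card =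
      2 + (m + n) + (Fr m n (Ky (rel π))).card := by
  have h := (rel_good π).count
  rw [← card_parts_eq π (Or.inl rfl), ← card_parts_eq π (Or.inr rfl)] at h
  omega

theorem covBy_of {m n : ℕ} {π π' : NC (Vconfig m n)} (h : π ≤ π')
    (hc : π.parts.card = π'.parts.card + 1) : π ⋖ π' := by
  refine ⟨lt_of_le_of_ne h ?_, ?_⟩
  · rintro rfl; omega
  · intro σ h1 h2
    have e1 : σ.parts.card < π.parts.card := card_lt_of_lt h1
    have e2 : π'.parts.card < σ.parts.card := card_lt_of_lt h2
    omega

/-- For all `m, n ≥ 0`, `NC(V_{m,n})` admits a symmetric chain decomposition: it can be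
partitioned into saturated chains, each satisfying
`ρ(min C) + ρ(max C) = (m + n + 1) - 1`, where `ρ(π) = (m + n + 1) - #blocks(π)`. -/
theorem nc_V_symmetric_chain_decomposition (m n : ℕ) :
    ∃ chains : Set (List (NC (Vconfig m n))),
      [] ∉ chains ∧
      (∀ x : NC (Vconfig m n), ∃! l, l ∈ chains ∧ x ∈ l) ∧
      (∀ l ∈ chains, List.Chain' (· ⋖ ·) l) ∧
      ∀ l ∈ chains, ∀ h : l ≠ [],
        ((m + n + 1) - (l.head h).parts.card) +
            ((m + n + 1) - (l.getLast h).parts.card) = (m + n + 1) - 1 := by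
  refine scd_transfer (X := NC (Vconfig m n)) (· ⋖ ·) (fun π => Ky (rel π))
    (fun π => Jn m n (rel π)) (Fr m n) (fun π => π.parts.card) (m + n) ?_ ?_ ?_ ?_ ?_ ?_
  · exact fun π => (rel_good π).Jn_subset
  · exact fun π π' h h' => rel_inj ((rel_good π).ext (rel_good π') h h')
  · intro π T hT
    obtain ⟨r', hr', h1, h2⟩ := (rel_good π).surj hT
    obtain ⟨π', rfl⟩ := rel_surj hr'
    exact ⟨π', h1, h2⟩
  · intro π π' a hk ha hJ
    have hk : Ky (rel π) = Ky (rel π') := hk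
    apply covBy_of
    · exact le_of_rel fun p q => (rel_good π).le (rel_good π') hk
        (by rw [hJ]; exact subset_insert _ _)
    · have e1 := card_formula π
      have e2 := card_formula π'
      rw [hJ, card_insert_of_notMem ha, ← hk] at e2
      omega
  · intro π
    exact Finset.card_pos.2 (π.1.parts_nonempty (by
      unfold Vconfig; exact (Finset.insert_nonempty _ _).ne_empty))
  · exact card_formula
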